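/- Let f be a cellular automaton on a ℤ^d-subshift and O a convex domain with unit perimeter. Then for every k ∈ ℕ, the rescaled entropy satisfies h^d_*(f^k, O) = k·h^d_*(f, O), where h^d_*(f, O) = sup over convex exhaustions 𝒥 = (J_n) with limit O of limsup_n h_*(f, 𝖯_{J_n})/p(J_n). -/

import Mathlib

open Set MeasureTheory Filter Topology Pointwise

/-- The group `ℤ^d`. -/
abbrev Zd (d : ℕ) := Fin d → ℤ

/-- Configurations `𝒜^{ℤ^d}` with the product topology (`A` discrete). -/
abbrev Config (A : Type*) (d : ℕ) := Zd d → A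

/-- The shift action of `ℤ^d`. -/
def shift {A : Type*} {d : ℕ} (l : Zd d) (x : Config A d) : Config A d := fun k => x (k + l)

/-- Embedding of `ℤ^d` in `ℝ^d`. -/
noncomputable def emb {d : ℕ} (z : Zd d) : EuclideanSpace ℝ (Fin d) :=
  (WithLp.equiv 2 (Fin d → ℝ)).symm fun i => (z i : ℝ)

/-- The lattice points of a subset `J` of `ℝ^d`, as a subset of `ℤ^d`. -/
def latOf {d : ℕ} (J : Set (EuclideanSpace ℝ (Fin d))) : Set (Zd d) := {z | emb z ∈ J}

/-- Perimeter: the `(d-1)`-dimensional Hausdorff measure of the boundary. -/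
noncomputable def per {d : ℕ} (J : Set (EuclideanSpace ℝ (Fin d))) : ℝ :=
  (μH[(d : ℝ) - 1] (frontier J)).toReal

/-- A convex exhaustion with limit `O`: convex domains whose perimeters tend to infinity
and whose rescalings by `p(J_n)^{-1/(d-1)}` converge to `O` in the Hausdorff metric. -/
def IsExhaustion {d : ℕ} (O : Set (EuclideanSpace ℝ (Fin d)))
    (J : ℕ → Set (EuclideanSpace ℝ (Fin d))) : Prop :=
  (∀ n, IsCompact (J n) ∧ Convex ℝ (J n) ∧ 0 ∈ interior (J n)) ∧
  Tendsto (fun n => per (J n)) atTop atTop ∧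
  Tendsto (fun n => Metric.hausdorffDist ((per (J n) ^ (-((d : ℝ) - 1)⁻¹)) • J n) O)
    atTop (𝓝 0)

/-- Topological entropy `h_top(f, 𝖯_L)` of `f` relative to the partition of `X` into
`L`-cylinders. -/
noncomputable def topPartEnt {A : Type*} {d : ℕ} (f : Config A d → Config A d)
    (X : Set (Config A d)) (L : Set (Zd d)) : ℝ :=
  limsup (fun n : ℕ =>
    Real.log (Nat.card ((fun x => fun (k : Fin n) (j : L) => f^[k] x (j : Zd d)) '' X)) / n)
    atTop

/-- Measure-theoretic entropy `h_μ(f, 𝖯_L)` of `f` relative to the partition into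
`L`-cylinders. -/
noncomputable def measPartEnt {A : Type*} {d : ℕ} [MeasurableSpace A]
    (μ : Measure (Config A d)) (f : Config A d → Config A d) (L : Set (Zd d)) : ℝ :=
  limsup (fun n : ℕ =>
    (∑' Q : Fin n → L → A,
      Real.negMulLog
        (μ {x | ∀ (k : Fin n) (j : L), f^[k] x (j : Zd d) = Q k j}).toReal) / n) atTop

/-- Rescaled topological entropy `h^d_top(f, O)`: supremum over convex exhaustions with
limit `O` of `limsup_n h_top(f, 𝖯_{J_n}) / p(J_n)`. -/
noncomputable def topRescEnt {A : Type*} {d : ℕ} (f : Config A d → Config A d)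
    (X : Set (Config A d)) (O : Set (EuclideanSpace ℝ (Fin d))) : ℝ :=
  sSup {h | ∃ J, IsExhaustion O J ∧
    h = limsup (fun n => topPartEnt f X (latOf (J n)) / per (J n)) atTop}

/-- Rescaled measure-theoretic entropy `h^d_μ(f, O)`. -/
noncomputable def measRescEnt {A : Type*} {d : ℕ} [MeasurableSpace A]
    (μ : Measure (Config A d)) (f : Config A d → Config A d)
    (O : Set (EuclideanSpace ℝ (Fin d))) : ℝ :=
  sSup {h | ∃ J, IsExhaustion O J ∧
    h = limsup (fun n => measPartEnt μ f (latOf (J n)) / per (J n)) atTop}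

/-!
Grouping the iterates of `f` into blocks of length `k` gives `h_*(f^k, 𝖯_J) ≤ k h_*(f, 𝖯_J)` for
every domain `J`. Conversely, enlarging `J_n` by the radii of `f, …, f^{k-1}` produces a domain
whose cylinders refine `⋁_{l<k} f^{-l} 𝖯_{J_n}`, hence `k h_*(f, 𝖯_{J_n}) ≤ h_*(f^k, 𝖯_{J_n'})`.
As `J_n` contains a ball of radius comparable to `p(J_n)^{1/(d-1)}`, a dilate `J_n' = c_n J_n` with
`c_n → 1` is large enough. Dilation does not change the rescaled domain, so the `J_n'` form an
exhaustion with the same limit, and their perimeters are equivalent to those of the `J_n`.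

The suprema are finite: what happens in `J_n` is determined by the initial pattern there and the
patterns seen over time in `c_n J_n \ J_n`, which has `O(p(J_n))` lattice points, so
`h_*(f, 𝖯_{J_n}) = O(p(J_n))`.

Both entropies enter only through monotonicity under refinement and the bound by the logarithm of
the number of cells, so they are treated simultaneously.
-/

section NormedSpace

open Metric

variable {E : Type*} [NormedAddCommGroup E] [NormedSpace ℝ E] {s : Set E}

lemma exists_pos_smul_mem_frontier (hs : Convex ℝ s) (hs0 : s ∈ 𝓝 0) (hb : Bornology.IsBounded s)
    {e : E} (he : e ≠ 0) : ∃ t : ℝ, 0 < t ∧ t • e ∈ frontier s := by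
  have hpos : 0 < gauge s e :=
    (gauge_pos (absorbent_nhds_zero hs0) ((NormedSpace.isVonNBounded_iff ℝ).2 hb)).2 he
  refine ⟨(gauge s e)⁻¹, inv_pos.2 hpos, (gauge_eq_one_iff_mem_frontier hs hs0).1 ?_⟩
  rw [gauge_smul_of_nonneg (inv_nonneg.2 hpos.le), smul_eq_mul, inv_mul_cancel₀ hpos.ne']

lemma subset_thickening_of_hausdorffDist_lt {α : Type*} [PseudoMetricSpace α] {s t : Set α}
    {ε : ℝ} (hs : s.Nonempty) (ht : t.Nonempty) (hsb : Bornology.IsBounded s)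
    (htb : Bornology.IsBounded t) (h : hausdorffDist s t < ε) : s ⊆ thickening ε t :=
  fun _ hx => mem_thickening_iff.2 <| exists_dist_lt_of_hausdorffDist_lt hx h
    (hausdorffEDist_ne_top_of_nonempty_of_bounded hs ht hsb htb)

-- A hyperplane separating `s` from `y` would leave the point of `ball y ε` farthest from it at
-- distance at least `ε` from `s`.
lemma ball_subset_of_ball_add_subset_thickening (hs : Convex ℝ s) (hsc : IsClosed s) {x : E}
    {r ε : ℝ} (hε : 0 < ε) (h : ball x (r + ε) ⊆ thickening ε s) : ball x r ⊆ s := by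
  intro y hy
  by_contra hys
  obtain ⟨g, u, hgs, hgy⟩ := geometric_hahn_banach_closed_point hs hsc hys
  have hδ : 0 < (g y - u) / ε := div_pos (sub_pos.2 hgy) hε
  obtain ⟨v, hv, hgv⟩ := g.exists_lt_apply_of_lt_opNorm (sub_lt_self ‖g‖ hδ)
  wlog hv0 : 0 ≤ g v generalizing v
  · exact this (-v) (by rwa [norm_neg]) (by rwa [map_neg, norm_neg])
      (by rw [map_neg]; linarith)
  rw [Real.norm_of_nonneg hv0] at hgv
  have hyv : y + ε • v ∈ ball x (r + ε) := by
    have hεv : ‖ε • v‖ < ε := by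
      rw [norm_smul, Real.norm_of_nonneg hε.le]
      exact mul_lt_of_lt_one_right hε hv
    rw [mem_ball, dist_eq_norm, add_sub_right_comm]
    exact (norm_add_le _ _).trans_lt (add_lt_add (mem_ball_iff_norm.1 hy) hεv)
  obtain ⟨z, hz, hzd⟩ := mem_thickening_iff.1 (h hyv)
  have hupper : g (y + ε • v) - g z ≤ ‖g‖ * ε := by
    rw [← map_sub]
    exact (le_abs_self _).trans (g.le_opNorm_of_le (dist_eq_norm (y + ε • v) z ▸ hzd.le))
  have hlower : ‖g‖ * ε - (g y - u) < ε * g v := by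
    have := mul_lt_mul_of_pos_left hgv hε
    rwa [mul_sub, mul_div_cancel₀ _ hε.ne', mul_comm ε ‖g‖] at this
  rw [map_add, map_smul, smul_eq_mul] at hupper
  linarith [hgs z hz]

lemma smul_add_closedBall_subset (hs : Convex ℝ s) {r R a : ℝ} (hr : 0 < r) (hR : 0 ≤ R)
    (ha : 0 ≤ a) (hball : closedBall 0 r ⊆ s) : a • s + closedBall 0 R ⊆ (a + R / r) • s := by
  rw [hs.add_smul ha (by positivity)]
  refine add_subset_add_left ?_
  calc closedBall 0 R = (R / r) • closedBall (0 : E) r := by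
        rw [smul_closedBall _ _ hr.le, smul_zero, Real.norm_of_nonneg (by positivity),
          div_mul_cancel₀ _ hr.ne']
    _ ⊆ (R / r) • s := smul_set_mono hball

end NormedSpace

section Perimeter

variable {d : ℕ} (J : Set (EuclideanSpace ℝ (Fin d)))

lemma per_nonneg : 0 ≤ per J := ENNReal.toReal_nonneg

lemma per_smul (hd : 1 ≤ d) {c : ℝ} (hc : 0 < c) : per (c • J) = c ^ (d - 1) * per J := by
  have hfrontier : frontier (c • J) = c • frontier J :=
    ((Homeomorph.smulOfNeZero c hc.ne').image_frontier J).symm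
  rw [per, per, hfrontier, ← Nat.cast_pred hd,
    Measure.hausdorffMeasure_smul₀ (Nat.cast_nonneg _) hc.ne', ENNReal.smul_def, smul_eq_mul,
    ENNReal.toReal_mul]
  simp [abs_of_pos hc]

/-- The length scale `p(J)^{1/(d-1)}` of a domain, by which exhaustions are rescaled. -/
noncomputable def lengthScale : ℝ := per J ^ ((d : ℝ) - 1)⁻¹

lemma lengthScale_nonneg : 0 ≤ lengthScale J := Real.rpow_nonneg (per_nonneg J) _

lemma per_rpow_neg : per J ^ (-((d : ℝ) - 1)⁻¹) = (lengthScale J)⁻¹ :=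
  Real.rpow_neg (per_nonneg J) _

lemma lengthScale_pow (hd : 2 ≤ d) : lengthScale J ^ (d - 1) = per J := by
  rw [lengthScale, ← Nat.cast_pred (by lia)]
  exact Real.rpow_inv_natCast_pow (per_nonneg J) (by lia)

lemma lengthScale_smul (hd : 2 ≤ d) {c : ℝ} (hc : 0 < c) :
    lengthScale (c • J) = c * lengthScale J := by
  rw [lengthScale, lengthScale, per_smul J (by lia) hc,
    Real.mul_rpow (by positivity) (per_nonneg J), ← Nat.cast_pred (by lia),
    Real.pow_rpow_inv_natCast hc.le (by lia)]

variable {J}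

-- On the line the perimeter counts boundary points, and a bounded interval has two.
lemma two_le_of_per_eq_one (hJ : Bornology.IsBounded J) (hconv : Convex ℝ J)
    (h0 : 0 ∈ interior J) (hper : per J = 1) : 2 ≤ d := by
  by_contra! hd
  interval_cases d
  · have huniv : J = univ := eq_univ_of_forall fun x => Subsingleton.elim 0 x ▸ interior_subset h0
    simp [per, huniv] at hper
  · have hnhds : J ∈ 𝓝 0 := mem_interior_iff_mem_nhds.1 h0
    have he : (EuclideanSpace.single 0 1 : EuclideanSpace ℝ (Fin 1)) ≠ 0 := by simp
    obtain ⟨t, ht, hx⟩ := exists_pos_smul_mem_frontier hconv hnhds hJ he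
    obtain ⟨u, hu, hy⟩ := exists_pos_smul_mem_frontier hconv hnhds hJ (neg_ne_zero.2 he)
    set e : EuclideanSpace ℝ (Fin 1) := EuclideanSpace.single 0 1
    have hne : t • e ≠ u • -e := fun h => by
      have : (t + u) • e = 0 := by rw [add_smul, h, smul_neg, neg_add_cancel]
      exact (smul_ne_zero (add_pos ht hu).ne' he) this
    have hfrontier : μH[0] (frontier J) = 1 := by
      simpa [per, ENNReal.toReal_eq_one_iff] using hper
    have hpair : μH[0] {t • e, u • -e} = 2 := by
      rw [insert_eq, measure_union (disjoint_singleton.2 hne) (measurableSet_singleton _),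
        Measure.hausdorffMeasure_zero_singleton, Measure.hausdorffMeasure_zero_singleton,
        one_add_one_eq_two]
    have hle := measure_mono (μ := μH[0]) (pair_subset hx hy)
    rw [hpair, hfrontier] at hle
    exact absurd hle (by norm_num)

end Perimeter

section Lattice

open Metric

variable {d : ℕ}

lemma one_le_dist_emb {z w : Zd d} (h : z ≠ w) : 1 ≤ dist (emb z) (emb w) := by
  obtain ⟨i, hi⟩ := Function.ne_iff.1 h
  calc (1 : ℝ) ≤ |(z i : ℝ) - w i| := mod_cast Int.one_le_abs (sub_ne_zero.2 hi)
    _ ≤ dist (emb z) (emb w) := by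
      simpa [dist_eq_norm, emb] using PiLp.norm_apply_le (emb z - emb w) i

lemma finite_latOf {J : Set (EuclideanSpace ℝ (Fin d))} (hJ : Bornology.IsBounded J) :
    (latOf J).Finite := by
  obtain ⟨M, hM⟩ := hJ.exists_norm_le
  have hcoord : ∀ z ∈ latOf J, ∀ i, |z i| ≤ ⌈M⌉ := fun z hz i => by
    have h : |(z i : ℝ)| ≤ ⌈M⌉ := calc
      |(z i : ℝ)| ≤ ‖emb z‖ := by simpa [emb] using PiLp.norm_apply_le (emb z) i
      _ ≤ M := hM _ hz
      _ ≤ ⌈M⌉ := Int.le_ceil M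
    exact_mod_cast h
  exact (finite_Icc (fun _ => -⌈M⌉) (fun _ => ⌈M⌉)).subset fun z hz =>
    ⟨fun i => (abs_le.1 (hcoord z hz i)).1, fun i => (abs_le.1 (hcoord z hz i)).2⟩

lemma ncard_mul_volume_ball_le {D : Set (Zd d)} (hD : D.Finite)
    {U : Set (EuclideanSpace ℝ (Fin d))} (hU : volume U ≠ ⊤)
    (hDU : ∀ z ∈ D, ball (emb z) (1 / 2) ⊆ U) :
    D.ncard * volume.real (ball (0 : EuclideanSpace ℝ (Fin d)) (1 / 2)) ≤ volume.real U := by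
  have hdisj : (hD.toFinset : Set (Zd d)).PairwiseDisjoint fun z => ball (emb z) (1 / 2 : ℝ) :=
    fun z _ w _ hzw => ball_disjoint_ball (by linarith [one_le_dist_emb hzw])
  calc D.ncard * volume.real (ball (0 : EuclideanSpace ℝ (Fin d)) (1 / 2))
      = ∑ z ∈ hD.toFinset, volume.real (ball (emb z) (1 / 2 : ℝ)) := by
        simp only [fun z => Measure.addHaar_real_ball_center volume (emb z : EuclideanSpace ℝ _),
          Finset.sum_const, nsmul_eq_mul, ncard_eq_toFinset_card D hD]
    _ = volume.real (⋃ z ∈ hD.toFinset, ball (emb z) (1 / 2 : ℝ)) :=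
        (measureReal_biUnion_finset hdisj (fun _ _ => measurableSet_ball)
          (fun _ _ => measure_ball_lt_top.ne)).symm
    _ ≤ volume.real U :=
        measureReal_mono (iUnion₂_subset fun z hz => hDU z (hD.mem_toFinset.1 hz)) hU

lemma volume_real_smul {a : ℝ} (ha : 0 ≤ a) (J : Set (EuclideanSpace ℝ (Fin d))) :
    volume.real (a • J) = a ^ d * volume.real J := by
  rw [measureReal_def, Measure.addHaar_smul_of_nonneg _ ha, ENNReal.toReal_mul,
    ENNReal.toReal_ofReal (by positivity), finrank_euclideanSpace_fin, measureReal_def]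

variable {J : Set (EuclideanSpace ℝ (Fin d))} {r R : ℝ}

lemma ball_emb_subset_smul_sdiff_smul (hJ : Convex ℝ J) (hR : 1 / 2 ≤ R) (hRr : R ≤ r)
    (hball : closedBall 0 r ⊆ J) {z : Zd d} (hz : z ∈ latOf ((1 + R / r) • J) \ latOf J) :
    ball (emb z) (1 / 2) ⊆ (1 + R / r + R / r) • J \ (1 - R / r) • J := by
  have hr : 0 < r := by linarith
  have hs : R / r ≤ 1 := (div_le_one hr).2 hRr
  have hs0 : 0 ≤ R / r := div_nonneg (by linarith) hr.le
  intro y hy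
  have hyz : y - emb z ∈ closedBall 0 R :=
    mem_closedBall_zero_iff.2 ((mem_ball_iff_norm.1 hy).le.trans hR)
  have hzy : emb z - y ∈ closedBall 0 R := by
    rwa [mem_closedBall_zero_iff, norm_sub_rev, ← mem_closedBall_zero_iff]
  refine ⟨?_, fun hyJ => hz.2 ?_⟩
  · have := smul_add_closedBall_subset hJ hr (by linarith) (by linarith) hball
      (add_mem_add hz.1 hyz)
    rwa [add_sub_cancel] at this
  · have := smul_add_closedBall_subset hJ hr (by linarith) (by linarith) hball
      (add_mem_add hyJ hzy)
    rwa [add_sub_cancel, sub_add_cancel, one_smul] at this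

lemma volume_smul_sdiff_smul_le (hJ : IsCompact J) (hconv : Convex ℝ J) (h0 : 0 ∈ J) {s : ℝ}
    (hs0 : 0 ≤ s) (hs1 : s ≤ 1) :
    volume.real ((1 + s + s) • J \ (1 - s) • J) ≤ 3 ^ d * d * s * volume.real J := by
  have hsub : (1 - s) • J ⊆ (1 + s + s) • J := by
    rw [show 1 + s + s = 1 - s + 3 * s by ring, hconv.add_smul (by linarith) (by positivity)]
    exact subset_add_left _ (zero_mem_smul_set h0)
  rw [measureReal_sdiff hsub (hJ.smul _).measurableSet (hJ.smul _).measure_lt_top.ne,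
    volume_real_smul (by positivity), volume_real_smul (by linarith), ← sub_mul]
  refine mul_le_mul_of_nonneg_right ?_ measureReal_nonneg
  have hmax : max |1 + s + s| |1 - s| ≤ 3 := by
    rw [abs_of_nonneg (by positivity), abs_of_nonneg (by linarith)]
    exact max_le (by linarith) (by linarith)
  have habs : |1 + s + s - (1 - s)| = 3 * s := by
    rw [abs_of_nonneg (by linarith)]; ring
  calc (1 + s + s) ^ d - (1 - s) ^ d
      ≤ 3 * s * d * max |1 + s + s| |1 - s| ^ (d - 1) :=
        habs ▸ (le_abs_self _).trans (abs_pow_sub_pow_le _ _ d)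
    _ ≤ 3 * s * d * 3 ^ (d - 1) := by gcongr
    _ = 3 ^ d * d * s := by
        cases d with
        | zero => simp
        | succ d => rw [Nat.add_sub_cancel, pow_succ]; ring

variable (d) in
lemma exists_ncard_latOf_smul_sdiff_le : ∃ C : ℝ, 0 ≤ C ∧
    ∀ {J : Set (EuclideanSpace ℝ (Fin d))} {r R : ℝ}, IsCompact J → Convex ℝ J → 1 / 2 ≤ R →
      R ≤ r → closedBall 0 r ⊆ J →
      (latOf ((1 + R / r) • J) \ latOf J).ncard ≤ C * (R / r) * volume.real J := by
  have hv : 0 < volume.real (ball (0 : EuclideanSpace ℝ (Fin d)) (1 / 2)) :=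
    ENNReal.toReal_pos (measure_ball_pos _ _ (by norm_num)).ne' measure_ball_lt_top.ne
  refine ⟨3 ^ d * d / volume.real (ball (0 : EuclideanSpace ℝ (Fin d)) (1 / 2)), by positivity,
    fun {J r R} hJ hconv hR hRr hball => ?_⟩
  have hr : 0 < r := by linarith
  have hcount := ncard_mul_volume_ball_le
    ((finite_latOf (hJ.smul (1 + R / r)).isBounded).sdiff (t := latOf J))
    (measure_ne_top_of_subset sdiff_subset (hJ.smul (1 + R / r + R / r)).measure_lt_top.ne)
    fun z hz => ball_emb_subset_smul_sdiff_smul hconv hR hRr hball hz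
  have hshell := volume_smul_sdiff_smul_le hJ hconv (hball (mem_closedBall_self hr.le))
    (div_nonneg (by linarith) hr.le) ((div_le_one hr).2 hRr)
  rw [div_mul_eq_mul_div, div_mul_eq_mul_div, le_div_iff₀ hv]
  exact hcount.trans hshell

end Lattice

namespace IsExhaustion

open Metric

variable {d : ℕ} {O : Set (EuclideanSpace ℝ (Fin d))} {J : ℕ → Set (EuclideanSpace ℝ (Fin d))}

lemma tendsto_lengthScale (hd : 2 ≤ d) (hJ : IsExhaustion O J) :
    Tendsto (fun n => lengthScale (J n)) atTop atTop := by
  have hd' : 0 < (d : ℝ) - 1 := by rw [← Nat.cast_pred (by lia)]; exact mod_cast (by lia)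
  exact (tendsto_rpow_atTop (inv_pos.2 hd')).comp hJ.2.1

lemma smul (hd : 2 ≤ d) (hJ : IsExhaustion O J) {c : ℕ → ℝ} (hc : ∀ n, 1 ≤ c n) :
    IsExhaustion O fun n => c n • J n := by
  have hpos : ∀ n, 0 < c n := fun n => one_pos.trans_le (hc n)
  refine ⟨fun n => ⟨(hJ.1 n).1.smul _, (hJ.1 n).2.1.smul _, ?_⟩, ?_, ?_⟩
  · rw [interior_smul₀ (hpos n).ne']
    exact zero_mem_smul_set (hJ.1 n).2.2
  · refine tendsto_atTop_mono (fun n => ?_) hJ.2.1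
    rw [per_smul _ (by lia) (hpos n)]
    exact le_mul_of_one_le_left (per_nonneg _) (one_le_pow₀ (hc n))
  · refine hJ.2.2.congr fun n => ?_
    rw [per_rpow_neg, per_rpow_neg, lengthScale_smul _ hd (hpos n), smul_smul, mul_inv,
      mul_right_comm, inv_mul_cancel₀ (hpos n).ne', one_mul]

lemma exists_closedBall_subset_subset_closedBall (hd : 2 ≤ d) (hO : IsCompact O)
    (h0 : 0 ∈ interior O) : ∃ ρ > 0, ∃ M ≥ 0, ∀ {J}, IsExhaustion O J → ∀ᶠ n in atTop,
      closedBall 0 (lengthScale (J n) * ρ) ⊆ J n ∧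
        J n ⊆ closedBall 0 (lengthScale (J n) * M) := by
  obtain ⟨δ, hδ, hball⟩ := Metric.mem_nhds_iff.1 (mem_interior_iff_mem_nhds.1 h0)
  obtain ⟨M, hM0, hM⟩ := hO.isBounded.subset_closedBall_lt 0 (0 : EuclideanSpace ℝ (Fin d))
  refine ⟨δ / 3, by positivity, δ / 2 + M, by positivity, fun {J} hJ => ?_⟩
  filter_upwards [hJ.2.2.eventually_lt_const (half_pos hδ),
    (hJ.tendsto_lengthScale hd).eventually_gt_atTop 0] with n hn hpos
  obtain ⟨hc, hconv, h0n⟩ := hJ.1 n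
  rw [per_rpow_neg] at hn
  set S := (lengthScale (J n))⁻¹ • J n
  have hJS : J n = lengthScale (J n) • S := (smul_inv_smul₀ hpos.ne' _).symm
  have hSne : S.Nonempty := ⟨0, zero_mem_smul_set (interior_subset h0n)⟩
  have hSb := (hc.smul (lengthScale (J n))⁻¹).isBounded
  have hOne : O.Nonempty := ⟨0, interior_subset h0⟩
  have hOS : O ⊆ thickening (δ / 2) S := subset_thickening_of_hausdorffDist_lt hOne hSne
    hO.isBounded hSb (by rwa [hausdorffDist_comm])
  have hSO : S ⊆ thickening (δ / 2) O :=
    subset_thickening_of_hausdorffDist_lt hSne hOne hSb hO.isBounded hn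
  have hin : ball 0 (δ / 2) ⊆ S := ball_subset_of_ball_add_subset_thickening (hconv.smul _)
    (hc.smul _).isClosed (half_pos hδ) (by rw [add_halves]; exact hball.trans hOS)
  have hout : S ⊆ closedBall 0 (δ / 2 + M) := calc
    S ⊆ thickening (δ / 2) (closedBall 0 M) := hSO.trans (thickening_subset_of_subset _ hM)
    _ = ball 0 (δ / 2 + M) := thickening_closedBall (half_pos hδ) hM0.le _
    _ ⊆ closedBall 0 (δ / 2 + M) := ball_subset_closedBall
  have hscale : ∀ r ≥ 0, closedBall (0 : EuclideanSpace ℝ (Fin d)) (lengthScale (J n) * r) =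
      lengthScale (J n) • closedBall 0 r := fun r hr => by
    rw [smul_closedBall _ _ hr, smul_zero, Real.norm_of_nonneg hpos.le]
  rw [hscale _ (by positivity), hscale _ (by positivity)]
  refine ⟨?_, hJS.trans_subset (smul_set_mono hout)⟩
  exact (smul_set_mono ((closedBall_subset_ball (by linarith)).trans hin)).trans hJS.superset

lemma exists_volume_le (hd : 2 ≤ d) (hO : IsCompact O) (h0 : 0 ∈ interior O) :
    ∃ C, ∀ {J}, IsExhaustion O J → ∀ᶠ n in atTop,
      volume.real (J n) ≤ C * (lengthScale (J n) * per (J n)) := by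
  obtain ⟨_, _, M, hM, hJM⟩ := exists_closedBall_subset_subset_closedBall hd hO h0
  refine ⟨M ^ d * volume.real (ball (0 : EuclideanSpace ℝ (Fin d)) 1), fun {J} hJ => ?_⟩
  filter_upwards [hJM hJ] with n hn
  have hpow : lengthScale (J n) ^ d = lengthScale (J n) * per (J n) := by
    rw [← lengthScale_pow _ hd, ← pow_succ', Nat.sub_add_cancel (by lia)]
  calc volume.real (J n) ≤ volume.real (closedBall 0 (lengthScale (J n) * M)) :=
        measureReal_mono hn.2 measure_closedBall_lt_top.ne
    _ = (lengthScale (J n) * M) ^ d * volume.real (ball (0 : EuclideanSpace ℝ (Fin d)) 1) := by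
        rw [Measure.addHaar_real_closedBall _ _ (mul_nonneg (lengthScale_nonneg _) hM),
          finrank_euclideanSpace_fin]
    _ = _ := by rw [mul_pow, hpow]; ring

-- The lattice points gained lie in a shell of bounded width around the boundary.
theorem exists_dilation (hd : 2 ≤ d) (hO : IsCompact O) (h0 : 0 ∈ interior O) {R : ℝ}
    (hR : 1 / 2 ≤ R) :
    ∃ C : ℝ, ∀ {J}, IsExhaustion O J → ∃ c : ℕ → ℝ, (∀ n, 1 ≤ c n) ∧ Tendsto c atTop (𝓝 1) ∧
      ∀ᶠ n in atTop, J n + closedBall 0 R ⊆ c n • J n ∧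
        ((latOf (c n • J n) \ latOf (J n)).ncard : ℝ) ≤ C * per (J n) := by
  obtain ⟨ρ, hρ, _, _, hJρ⟩ := exists_closedBall_subset_subset_closedBall hd hO h0
  obtain ⟨V, hV⟩ := exists_volume_le hd hO h0
  obtain ⟨C, hC0, hC⟩ := exists_ncard_latOf_smul_sdiff_le d
  refine ⟨C * (R / ρ) * V, fun {J} hJ => ⟨fun n => 1 + R / (lengthScale (J n) * ρ), fun n => ?_,
    ?_, ?_⟩⟩
  · exact le_add_of_nonneg_right
      (div_nonneg (by linarith) (mul_nonneg (lengthScale_nonneg _) hρ.le))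
  · simpa using (((hJ.tendsto_lengthScale hd).atTop_mul_const hρ).const_div_atTop R).const_add 1
  filter_upwards [hJρ hJ, hV hJ, (hJ.tendsto_lengthScale hd).eventually_gt_atTop 0,
    ((hJ.tendsto_lengthScale hd).atTop_mul_const hρ).eventually_ge_atTop R] with n hin hvol hpos hl
  obtain ⟨hc, hconv, -⟩ := hJ.1 n
  constructor
  · simpa using smul_add_closedBall_subset hconv (mul_pos hpos hρ) (by linarith) zero_le_one hin.1
  calc ((latOf _ \ latOf (J n)).ncard : ℝ)
      ≤ C * (R / (lengthScale (J n) * ρ)) * volume.real (J n) := hC hc hconv hR hl hin.1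
    _ ≤ C * (R / (lengthScale (J n) * ρ)) * (V * (lengthScale (J n) * per (J n))) :=
        mul_le_mul_of_nonneg_left hvol
          (mul_nonneg hC0 (div_nonneg (by linarith) (mul_pos hpos hρ).le))
    _ = C * (R / ρ) * V * per (J n) := by field_simp

end IsExhaustion

section Limsup

lemma limsup_le_mul_limsup_comp {ι κ : Type*} {l : Filter ι} {m : Filter κ} [l.NeBot]
    {v c : ι → ℝ} {w : κ → ℝ} {φ : ι → κ} {a : ℝ} (hφ : Tendsto φ l m) (hc : Tendsto c l (𝓝 a))
    (hc0 : ∀ᶠ i in l, 0 ≤ c i) (hv : ∀ᶠ i in l, 0 ≤ v i) (hw : ∀ᶠ j in m, 0 ≤ w j)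
    (hwB : m.IsBoundedUnder (· ≤ ·) w) (hvw : ∀ᶠ i in l, v i ≤ c i * w (φ i)) :
    limsup v l ≤ a * limsup w m := by
  have hwφ := hφ.eventually hw
  have hwφB : l.IsBoundedUnder (· ≤ ·) (w ∘ φ) := hφ.isBoundedUnder_comp hwB
  calc limsup v l ≤ limsup (c * w ∘ φ) l := limsup_le_limsup hvw
        (isCoboundedUnder_le_of_eventually_le l hv)
        (isBoundedUnder_le_mul_of_nonneg hc0.frequently hc.isBoundedUnder_le hwφ hwφB)
    _ ≤ limsup c l * limsup (w ∘ φ) l :=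
        limsup_mul_le hc0.frequently hc.isBoundedUnder_le hwφ hwφB
    _ = a * limsup (w ∘ φ) l := by rw [hc.limsup_eq]
    _ ≤ a * limsup w m := mul_le_mul_of_nonneg_left
        (hφ.limsup_comp_le_limsup (isCoboundedUnder_le_of_eventually_le l hwφ) hwB)
        (ge_of_tendsto hc hc0)

end Limsup

section Pattern

variable {A : Type*} {d : ℕ}

/-- The `L`-patterns seen along the first `n` steps of the orbit of `x`; the fibres of
`pattern f n L` are the cells of `⋁_{t<n} f^{-t} 𝖯_L`. -/
def pattern (f : Config A d → Config A d) (n : ℕ) (L : Set (Zd d)) (x : Config A d) :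
    Fin n → L → A := fun t j => f^[t] x j

/-- The partition of `X` into `L'`-cylinders refines `f⁻¹ 𝖯_L`. -/
def CylRefines (X : Set (Config A d)) (f : Config A d → Config A d) (L' L : Set (Zd d)) : Prop :=
  ∀ ⦃x⦄, x ∈ X → ∀ ⦃y⦄, y ∈ X → EqOn x y L' → EqOn (f x) (f y) L

variable {f : Config A d → Config A d} {L L' : Set (Zd d)} {X : Set (Config A d)} {n : ℕ}

lemma pattern_eq_iff {x y : Config A d} :
    pattern f n L x = pattern f n L y ↔ ∀ t < n, EqOn (f^[t] x) (f^[t] y) L := by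
  simp [pattern, funext_iff, Fin.forall_iff, EqOn]

lemma pattern_preimage_singleton (Q : Fin n → L → A) :
    pattern f n L ⁻¹' {Q} = {x | ∀ (k : Fin n) (j : L), f^[k] x j = Q k j} := by
  ext x
  simp only [mem_preimage, mem_singleton_iff, mem_ofPred_eq, pattern, funext_iff]

lemma log_card_pattern (n : ℕ) (hL : L.Finite) :
    Real.log (Nat.card (Fin n → L → A)) = n * (L.ncard * Real.log (Nat.card A)) := by
  have := hL.to_subtype
  simp [Nat.card_fun, Nat.card_coe_set_eq]

lemma measurable_pattern [MeasurableSpace A] (hf : Measurable f) (n : ℕ) (L : Set (Zd d)) :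
    Measurable (pattern f n L) :=
  measurable_pi_lambda _ fun t => measurable_pi_lambda _ fun _ =>
    (measurable_pi_apply _).comp (hf.iterate t)

lemma pattern_eq_of_pattern_iterate_eq {k : ℕ} (hk : 0 < k) {x y : Config A d}
    (h : pattern f (n * k) L x = pattern f (n * k) L y) :
    pattern f^[k] n L x = pattern f^[k] n L y := by
  rw [pattern_eq_iff] at h ⊢
  intro t ht
  rw [← Function.iterate_mul, mul_comm]
  exact h _ (Nat.mul_lt_mul_of_pos_right ht hk)

lemma pattern_eq_of_pattern_iterate_eq_of_cylRefines (hX : MapsTo f X X) {k : ℕ} (hk : 0 < k)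
    (hL : ∀ l < k, CylRefines X f^[l] L' L) {x y : Config A d} (hx : x ∈ X) (hy : y ∈ X)
    (h : pattern f^[k] (n / k + 1) L' x = pattern f^[k] (n / k + 1) L' y) :
    pattern f n L x = pattern f n L y := by
  rw [pattern_eq_iff] at h ⊢
  intro t ht
  have hq := hL (t % k) (Nat.mod_lt _ hk) ((hX.iterate k).iterate (t / k) hx)
    ((hX.iterate k).iterate (t / k) hy) (h _ (Nat.lt_succ_of_le (Nat.div_le_div_right ht.le)))
  rwa [← Function.iterate_mul, ← Function.iterate_add_apply, ← Function.iterate_add_apply,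
    Nat.mod_add_div] at hq

lemma pattern_eq_of_pattern_sdiff_eq (hX : MapsTo f X X) (hL : CylRefines X f L' L)
    {x y : Config A d} (hx : x ∈ X) (hy : y ∈ X) (h0 : pattern f 1 L x = pattern f 1 L y)
    (h : pattern f n (L' \ L) x = pattern f n (L' \ L) y) :
    pattern f n L x = pattern f n L y := by
  rw [pattern_eq_iff] at h0 h ⊢
  intro t ht
  induction t with
  | zero => exact h0 0 one_pos
  | succ t ih =>
    rw [Function.iterate_succ_apply', Function.iterate_succ_apply']
    refine hL (hX.iterate t hx) (hX.iterate t hy) ?_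
    exact ((ih (by lia)).union (h t (by lia))).mono
      (by rw [union_sdiff_self]; exact subset_union_right)

end Pattern

section Entropy

universe u

lemma log_natCast_mul_le (a b : ℕ) : Real.log (a * b) ≤ Real.log a + Real.log b := by
  rcases eq_or_ne a 0 with rfl | ha
  · simpa using Real.log_natCast_nonneg b
  rcases eq_or_ne b 0 with rfl | hb
  · simpa using Real.log_natCast_nonneg a
  exact (Real.log_mul (mod_cast ha) (mod_cast hb)).le

/-- The features shared by the topological and the measure-theoretic entropy of finite-valued
observables on `X`. An observable `φ` stands for the partition of `X` into its fibres, so `mono`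
compares partitions by refinement. -/
structure EntropyFunctional {Ω : Type u} [MeasurableSpace Ω] (X : Set Ω) where
  /-- The entropy of an observable. -/
  entropy : ∀ {F : Type u}, (Ω → F) → ℝ
  nonneg : ∀ {F : Type u} [Finite F] {φ : Ω → F}, 0 ≤ entropy φ
  mono : ∀ {F G : Type u} [Finite F] [MeasurableSpace F] [MeasurableSingletonClass F] [Finite G]
    {φ : Ω → F} {ψ : Ω → G}, Measurable φ →
    (X.domRestrict ψ).FactorsThrough (X.domRestrict φ) → entropy ψ ≤ entropy φ
  le_log_card : ∀ {F : Type u} [Finite F] [MeasurableSpace F] [MeasurableSingletonClass F]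
    {φ : Ω → F}, Measurable φ → entropy φ ≤ Real.log (Nat.card F)

namespace EntropyFunctional

variable {A : Type u} {d : ℕ} [MeasurableSpace A] {X : Set (Config A d)}
  (E : EntropyFunctional X)

/-- The entropy `h_*(f, 𝖯_L)` of `f` relative to the partition into `L`-cylinders. -/
noncomputable def partEnt (f : Config A d → Config A d) (L : Set (Zd d)) : ℝ :=
  limsup (fun n : ℕ => E.entropy (pattern f n L) / n) atTop

/-- The growth rate `limsup_n h_*(f, 𝖯_{J_n}) / p(J_n)` along an exhaustion. -/
noncomputable def exhEnt (f : Config A d → Config A d)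
    (J : ℕ → Set (EuclideanSpace ℝ (Fin d))) : ℝ :=
  limsup (fun n => E.partEnt f (latOf (J n)) / per (J n)) atTop

/-- The rescaled entropy `h^d_*(f, O)`. -/
noncomputable def rescEnt (f : Config A d → Config A d)
    (O : Set (EuclideanSpace ℝ (Fin d))) : ℝ :=
  sSup {h | ∃ J, IsExhaustion O J ∧ h = E.exhEnt f J}

variable [Finite A] {f : Config A d → Config A d} {L L' : Set (Zd d)}

lemma entropy_pattern_div_nonneg (hL : L.Finite) (n : ℕ) : 0 ≤ E.entropy (pattern f n L) / n := by
  have := hL.to_subtype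
  exact div_nonneg E.nonneg n.cast_nonneg

variable [MeasurableSingletonClass A]

lemma entropy_pattern_div_le (hf : Measurable f) (hL : L.Finite) (n : ℕ) :
    E.entropy (pattern f n L) / n ≤ L.ncard * Real.log (Nat.card A) := by
  have := hL.to_subtype
  refine div_le_of_le_mul₀ n.cast_nonneg
    (mul_nonneg (Nat.cast_nonneg _) (Real.log_natCast_nonneg _)) ?_
  rw [mul_comm, ← log_card_pattern n hL]
  exact E.le_log_card (measurable_pattern hf n L)

lemma isBoundedUnder_entropy_pattern_div (hf : Measurable f) (hL : L.Finite) :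
    atTop.IsBoundedUnder (· ≤ ·) fun n : ℕ => E.entropy (pattern f n L) / n :=
  isBoundedUnder_of ⟨_, E.entropy_pattern_div_le hf hL⟩

lemma partEnt_nonneg (hf : Measurable f) (hL : L.Finite) : 0 ≤ E.partEnt f L :=
  le_limsup_of_frequently_le (.of_forall (E.entropy_pattern_div_nonneg hL))
    (E.isBoundedUnder_entropy_pattern_div hf hL)

lemma partEnt_div_per_nonneg (hf : Measurable f) {O : Set (EuclideanSpace ℝ (Fin d))}
    {J : ℕ → Set (EuclideanSpace ℝ (Fin d))} (hJ : IsExhaustion O J) (n : ℕ) :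
    0 ≤ E.partEnt f (latOf (J n)) / per (J n) :=
  div_nonneg (E.partEnt_nonneg hf (finite_latOf (hJ.1 n).1.isBounded)) (per_nonneg _)

lemma partEnt_iterate_le (hf : Measurable f) (hL : L.Finite) {k : ℕ} (hk : 0 < k) :
    E.partEnt f^[k] L ≤ k * E.partEnt f L := by
  have := hL.to_subtype
  refine limsup_le_mul_limsup_comp (φ := fun n => n * k) (tendsto_id.atTop_mul_const' hk)
    tendsto_const_nhds (.of_forall fun _ => k.cast_nonneg)
    (.of_forall (E.entropy_pattern_div_nonneg hL)) (.of_forall (E.entropy_pattern_div_nonneg hL))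
    (E.isBoundedUnder_entropy_pattern_div hf hL) (.of_forall fun n => ?_)
  have hmono : E.entropy (pattern f^[k] n L) ≤ E.entropy (pattern f (n * k) L) :=
    E.mono (measurable_pattern hf _ _) fun _ _ hxy => pattern_eq_of_pattern_iterate_eq hk hxy
  have hk' : (k : ℝ) ≠ 0 := by positivity
  calc E.entropy (pattern f^[k] n L) / n ≤ E.entropy (pattern f (n * k) L) / n := by gcongr
    _ = k * (E.entropy (pattern f (n * k) L) / ((n * k : ℕ) : ℝ)) := by
      push_cast
      rw [mul_comm (n : ℝ), ← div_div, mul_div_assoc', mul_div_cancel₀ _ hk']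

lemma mul_partEnt_le (hf : Measurable f) (hX : MapsTo f X X) (hL : L.Finite) (hL' : L'.Finite)
    {k : ℕ} (hk : 0 < k) (h : ∀ l < k, CylRefines X f^[l] L' L) :
    k * E.partEnt f L ≤ E.partEnt f^[k] L' := by
  have := hL.to_subtype
  have := hL'.to_subtype
  have hlim : Tendsto (fun m : ℕ => (k : ℝ)⁻¹ + 1 / (m : ℝ)) atTop (𝓝 (k : ℝ)⁻¹) := by
    simpa using tendsto_one_div_atTop_nhds_zero_nat.const_add (k : ℝ)⁻¹
  rw [← le_inv_mul_iff₀ (by positivity)]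
  refine limsup_le_mul_limsup_comp (φ := fun m => m / k + 1)
    ((tendsto_add_atTop_nat 1).comp (Nat.tendsto_div_const_atTop hk.ne')) hlim
    (.of_forall fun _ => by positivity) (.of_forall (E.entropy_pattern_div_nonneg hL))
    (.of_forall (E.entropy_pattern_div_nonneg hL'))
    (E.isBoundedUnder_entropy_pattern_div (hf.iterate k) hL') ?_
  filter_upwards [eventually_gt_atTop 0] with m hm
  have hmono : E.entropy (pattern f m L) ≤ E.entropy (pattern f^[k] (m / k + 1) L') :=
    E.mono (measurable_pattern (hf.iterate k) _ _) fun x y hxy =>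
      pattern_eq_of_pattern_iterate_eq_of_cylRefines hX hk h x.2 y.2 hxy
  have hm' : (0 : ℝ) < m := by positivity
  have hq : ((m / k + 1 : ℕ) : ℝ) / m ≤ (k : ℝ)⁻¹ + 1 / m := by
    rw [div_le_iff₀ hm', add_mul, one_div_mul_cancel hm'.ne', inv_mul_eq_div, Nat.cast_succ]
    gcongr
    exact Nat.cast_div_le
  calc E.entropy (pattern f m L) / m ≤ E.entropy (pattern f^[k] (m / k + 1) L') / m := by gcongr
    _ = ((m / k + 1 : ℕ) : ℝ) / m *
        (E.entropy (pattern f^[k] (m / k + 1) L') / ((m / k + 1 : ℕ) : ℝ)) := by field_simp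
    _ ≤ _ := mul_le_mul_of_nonneg_right hq (E.entropy_pattern_div_nonneg hL' _)

lemma entropy_pattern_le_add (hf : Measurable f) (hX : MapsTo f X X) (hL : L.Finite)
    (hL' : L'.Finite) (h : CylRefines X f L' L) (n : ℕ) :
    E.entropy (pattern f n L) ≤
      L.ncard * Real.log (Nat.card A) + n * ((L' \ L).ncard * Real.log (Nat.card A)) := by
  have := hL.to_subtype
  have := (hL'.sdiff (t := L)).to_subtype
  have hmeas := (measurable_pattern hf 1 L).prodMk (measurable_pattern hf n (L' \ L))
  calc E.entropy (pattern f n L)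
      ≤ E.entropy fun x => (pattern f 1 L x, pattern f n (L' \ L) x) :=
        E.mono hmeas fun x y hxy => pattern_eq_of_pattern_sdiff_eq hX h x.2 y.2
          (Prod.ext_iff.1 hxy).1 (Prod.ext_iff.1 hxy).2
    _ ≤ Real.log (Nat.card ((Fin 1 → L → A) × (Fin n → ↥(L' \ L) → A))) := E.le_log_card hmeas
    _ ≤ Real.log (Nat.card (Fin 1 → L → A)) +
        Real.log (Nat.card (Fin n → ↥(L' \ L) → A)) := by
        rw [Nat.card_prod, Nat.cast_mul]
        exact log_natCast_mul_le _ _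
    _ = L.ncard * Real.log (Nat.card A) + n * ((L' \ L).ncard * Real.log (Nat.card A)) := by
        rw [log_card_pattern 1 hL, log_card_pattern n hL'.sdiff, Nat.cast_one, one_mul]

lemma partEnt_le_ncard_sdiff (hf : Measurable f) (hX : MapsTo f X X) (hL : L.Finite)
    (hL' : L'.Finite) (h : CylRefines X f L' L) :
    E.partEnt f L ≤ (L' \ L).ncard * Real.log (Nat.card A) := by
  have hlim : Tendsto (fun n : ℕ => (L.ncard * Real.log (Nat.card A)) / (n : ℝ) +
      (L' \ L).ncard * Real.log (Nat.card A)) atTop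
      (𝓝 ((L' \ L).ncard * Real.log (Nat.card A))) := by
    simpa using (tendsto_const_div_atTop_nhds_zero_nat (L.ncard * Real.log (Nat.card A))).add_const
      ((L' \ L).ncard * Real.log (Nat.card A))
  rw [← hlim.limsup_eq]
  refine limsup_le_limsup ?_ (isCoboundedUnder_le_of_eventually_le atTop
    (.of_forall (E.entropy_pattern_div_nonneg hL))) hlim.isBoundedUnder_le
  filter_upwards [eventually_gt_atTop 0] with n hn
  have hn' : (n : ℝ) ≠ 0 := by positivity
  rw [div_add' _ _ _ hn', mul_comm _ (n : ℝ)]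
  exact div_le_div_of_nonneg_right (E.entropy_pattern_le_add hf hX hL hL' h n) n.cast_nonneg

lemma partEnt_id (hL : L.Finite) : E.partEnt id L = 0 := by
  refine le_antisymm ?_ (E.partEnt_nonneg measurable_id hL)
  simpa using E.partEnt_le_ncard_sdiff measurable_id (mapsTo_id X) hL hL
    fun x _ y _ hxy => hxy

lemma rescEnt_id (O : Set (EuclideanSpace ℝ (Fin d))) : E.rescEnt id O = 0 := by
  have hexh : ∀ {J}, IsExhaustion O J → E.exhEnt id J = 0 := fun hJ => by
    simp [exhEnt, fun n => E.partEnt_id (finite_latOf (hJ.1 n).1.isBounded)]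
  have hzero : ∀ h ∈ {h | ∃ J, IsExhaustion O J ∧ h = E.exhEnt id J}, h = 0 := by
    rintro _ ⟨J, hJ, rfl⟩
    exact hexh hJ
  exact le_antisymm (Real.sSup_le (fun h hh => (hzero h hh).le) le_rfl)
    (Real.sSup_nonneg fun h hh => (hzero h hh).ge)

end EntropyFunctional

end Entropy

section CellularAutomaton

open Metric

variable {A : Type*} {d : ℕ} [TopologicalSpace A]

/-- A cellular automaton on the subshift `X`, as a map of the full shift restricted to `X`. -/
structure IsCellularAutomaton (X : Set (Config A d)) (f : Config A d → Config A d) : Prop where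
  isClosed : IsClosed X
  shift_mem : ∀ l, ∀ x ∈ X, shift l x ∈ X
  mapsTo : MapsTo f X X
  continuousOn : ContinuousOn f X
  map_shift : ∀ l, ∀ x ∈ X, f (shift l x) = shift l (f x)

namespace IsCellularAutomaton

variable {X : Set (Config A d)} {f : Config A d → Config A d}

lemma iterate (hf : IsCellularAutomaton X f) (k : ℕ) : IsCellularAutomaton X f^[k] where
  isClosed := hf.isClosed
  shift_mem := hf.shift_mem
  mapsTo := hf.mapsTo.iterate k
  continuousOn := hf.continuousOn.iterate hf.mapsTo k
  map_shift l := by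
    induction k with
    | zero => exact fun _ _ => rfl
    | succ k ih =>
      intro x hx
      rw [Function.iterate_succ_apply, Function.iterate_succ_apply, hf.map_shift l x hx,
        ih _ (hf.mapsTo hx)]

variable [DiscreteTopology A]

lemma exists_finset_eqOn_nhdsWithin (hf : IsCellularAutomaton X f) {x : Config A d}
    (hx : x ∈ X) : ∃ I : Finset (Zd d), ∀ y ∈ X, EqOn y x I → f y 0 = f x 0 := by
  have hnhds : {y | f y 0 = f x 0} ∈ 𝓝[X] x :=
    ((continuous_apply 0).continuousAt.comp_continuousWithinAt (hf.continuousOn x hx))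
      ((isOpen_discrete {f x 0}).mem_nhds rfl)
  obtain ⟨U, hU, hxU, hUX⟩ := mem_nhdsWithin.1 hnhds
  obtain ⟨I, V, hV, hVU⟩ := isOpen_pi_iff.1 hU x hxU
  exact ⟨I, fun y hy hyx => hUX ⟨hVU fun i hi => (hyx hi).symm ▸ (hV i hi).2, hy⟩⟩

-- Curtis–Hedlund–Lyndon: by compactness of `X` finitely many of the local neighbourhoods suffice.
lemma exists_finset_eqOn [Finite A] (hf : IsCellularAutomaton X f) :
    ∃ I : Finset (Zd d), ∀ x ∈ X, ∀ y ∈ X, EqOn x y I → f x 0 = f y 0 := by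
  classical
  choose! I hI using fun x (hx : x ∈ X) => hf.exists_finset_eqOn_nhdsWithin hx
  have hcyl : ∀ x : Config A d, {y | EqOn y x (I x)} ∈ 𝓝 x := fun x =>
    set_pi_mem_nhds (I x).finite_toSet fun i _ => (isOpen_discrete {x i}).mem_nhds rfl
  obtain ⟨T, hTX, hT⟩ := hf.isClosed.isCompact.elim_nhds_subcover _ fun x _ => hcyl x
  refine ⟨T.biUnion I, fun x hx y hy hxy => ?_⟩
  obtain ⟨t, ht, hxt⟩ := mem_iUnion₂.1 (hT hx)
  have hyx : EqOn y x (I t) := fun i hi => (hxy (Finset.mem_biUnion.2 ⟨t, ht, hi⟩)).symm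
  rw [hI t (hTX t ht) x hx hxt, hI t (hTX t ht) y hy (hyx.trans hxt)]

lemma exists_radius [Finite A] (hf : IsCellularAutomaton X f) :
    ∃ R : ℝ, ∀ {J J' : Set (EuclideanSpace ℝ (Fin d))}, J + closedBall 0 R ⊆ J' →
      CylRefines X f (latOf J') (latOf J) := by
  obtain ⟨I, hI⟩ := hf.exists_finset_eqOn
  obtain ⟨R, hR⟩ := (I.finite_toSet.image emb).isBounded.subset_closedBall 0
  refine ⟨R, fun {J J'} hJ x hx y hy hxy z hz => ?_⟩
  have hshift : EqOn (shift z x) (shift z y) I := fun i hi => hxy <| by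
    have hemb : emb (i + z) = emb z + emb i := by
      ext j
      simp [emb, add_comm]
    exact hJ (hemb ▸ add_mem_add hz (hR ⟨i, hi, rfl⟩))
  have h0 := hI _ (hf.shift_mem z x hx) _ (hf.shift_mem z y hy) hshift
  simpa [hf.map_shift z x hx, hf.map_shift z y hy, shift] using h0

theorem exists_dilation [Finite A] (hf : IsCellularAutomaton X f) (hd : 2 ≤ d)
    {O : Set (EuclideanSpace ℝ (Fin d))} (hO : IsCompact O) (h0 : 0 ∈ interior O) (k : ℕ) :
    ∃ C : ℝ, ∀ {J}, IsExhaustion O J → ∃ c : ℕ → ℝ, (∀ n, 1 ≤ c n) ∧ Tendsto c atTop (𝓝 1) ∧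
      ∀ᶠ n in atTop, (∀ l ≤ k, CylRefines X f^[l] (latOf (c n • J n)) (latOf (J n))) ∧
        ((latOf (c n • J n) \ latOf (J n)).ncard : ℝ) ≤ C * per (J n) := by
  choose R hR using fun l => (hf.iterate l).exists_radius
  obtain ⟨M, hM⟩ := ((finite_Iic k).image R).bddAbove
  obtain ⟨C, hC⟩ := IsExhaustion.exists_dilation hd hO h0 (le_max_left (1 / 2) M)
  refine ⟨C, fun {J} hJ => ?_⟩
  obtain ⟨c, hc1, hclim, hc⟩ := hC hJ
  refine ⟨c, hc1, hclim, hc.mono fun n hn => ⟨fun l hl => hR l (subset_trans ?_ hn.1), hn.2⟩⟩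
  exact add_subset_add_left
    (closedBall_subset_closedBall ((hM ⟨l, hl, rfl⟩).trans (le_max_right _ _)))

end IsCellularAutomaton

end CellularAutomaton

namespace EntropyFunctional

universe u

variable {A : Type u} {d : ℕ} [Finite A] [TopologicalSpace A] [DiscreteTopology A]
  [MeasurableSpace A] [MeasurableSingletonClass A] {X : Set (Config A d)}
  {f : Config A d → Config A d} {O : Set (EuclideanSpace ℝ (Fin d))}
  {J : ℕ → Set (EuclideanSpace ℝ (Fin d))} (E : EntropyFunctional X)

lemma exists_partEnt_div_per_le (hf : IsCellularAutomaton X f) (hfm : Measurable f) (hd : 2 ≤ d)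
    (hO : IsCompact O) (h0 : 0 ∈ interior O) :
    ∃ B, ∀ {J}, IsExhaustion O J → ∀ᶠ n in atTop, E.partEnt f (latOf (J n)) / per (J n) ≤ B := by
  obtain ⟨C, hC⟩ := hf.exists_dilation hd hO h0 1
  refine ⟨C * Real.log (Nat.card A), fun {J} hJ => ?_⟩
  obtain ⟨c, hc1, -, hc⟩ := hC hJ
  filter_upwards [hc, hJ.2.1.eventually_gt_atTop 0] with n hn hper
  rw [div_le_iff₀ hper, mul_right_comm]
  calc E.partEnt f (latOf (J n))
      ≤ (latOf (c n • J n) \ latOf (J n)).ncard * Real.log (Nat.card A) :=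
        E.partEnt_le_ncard_sdiff hfm hf.mapsTo (finite_latOf (hJ.1 n).1.isBounded)
          (finite_latOf ((hJ.smul hd hc1).1 n).1.isBounded) (hn.1 1 le_rfl)
    _ ≤ C * per (J n) * Real.log (Nat.card A) :=
        mul_le_mul_of_nonneg_right hn.2 (Real.log_natCast_nonneg _)

lemma isBoundedUnder_partEnt_div_per (hf : IsCellularAutomaton X f) (hfm : Measurable f)
    (hd : 2 ≤ d) (hO : IsCompact O) (h0 : 0 ∈ interior O) (hJ : IsExhaustion O J) :
    atTop.IsBoundedUnder (· ≤ ·) fun n => E.partEnt f (latOf (J n)) / per (J n) :=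
  have ⟨_, hB⟩ := E.exists_partEnt_div_per_le hf hfm hd hO h0
  isBoundedUnder_of_eventually_le (hB hJ)

lemma exhEnt_nonneg (hf : IsCellularAutomaton X f) (hfm : Measurable f)
    (hd : 2 ≤ d) (hO : IsCompact O) (h0 : 0 ∈ interior O) (hJ : IsExhaustion O J) :
    0 ≤ E.exhEnt f J :=
  le_limsup_of_frequently_le (.of_forall (E.partEnt_div_per_nonneg hfm hJ))
    (E.isBoundedUnder_partEnt_div_per hf hfm hd hO h0 hJ)

lemma exhEnt_le_rescEnt (hf : IsCellularAutomaton X f) (hfm : Measurable f)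
    (hd : 2 ≤ d) (hO : IsCompact O) (h0 : 0 ∈ interior O) (hJ : IsExhaustion O J) :
    E.exhEnt f J ≤ E.rescEnt f O := by
  obtain ⟨B, hB⟩ := E.exists_partEnt_div_per_le hf hfm hd hO h0
  refine le_csSup ⟨B, ?_⟩ ⟨J, hJ, rfl⟩
  rintro _ ⟨J, hJ, rfl⟩
  exact limsup_le_of_le (isCoboundedUnder_le_of_eventually_le atTop
    (.of_forall (E.partEnt_div_per_nonneg hfm hJ))) (hB hJ)

lemma rescEnt_nonneg (hf : IsCellularAutomaton X f) (hfm : Measurable f)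
    (hd : 2 ≤ d) (hO : IsCompact O) (h0 : 0 ∈ interior O) : 0 ≤ E.rescEnt f O := by
  refine Real.sSup_nonneg ?_
  rintro _ ⟨J, hJ, rfl⟩
  exact E.exhEnt_nonneg hf hfm hd hO h0 hJ

lemma exhEnt_iterate_le (hf : IsCellularAutomaton X f) (hfm : Measurable f)
    (hd : 2 ≤ d) (hO : IsCompact O) (h0 : 0 ∈ interior O) (hJ : IsExhaustion O J) {k : ℕ}
    (hk : 0 < k) : E.exhEnt f^[k] J ≤ k * E.exhEnt f J := by
  refine limsup_le_mul_limsup_comp tendsto_id tendsto_const_nhds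
    (.of_forall fun _ => k.cast_nonneg) (.of_forall (E.partEnt_div_per_nonneg (hfm.iterate k) hJ))
    (.of_forall (E.partEnt_div_per_nonneg hfm hJ))
    (E.isBoundedUnder_partEnt_div_per hf hfm hd hO h0 hJ) (.of_forall fun n => ?_)
  rw [id_eq, ← mul_div_assoc]
  exact div_le_div_of_nonneg_right
    (E.partEnt_iterate_le hfm (finite_latOf (hJ.1 n).1.isBounded) hk) (per_nonneg _)

lemma exists_mul_exhEnt_le (hf : IsCellularAutomaton X f) (hfm : Measurable f)
    (hd : 2 ≤ d) (hO : IsCompact O) (h0 : 0 ∈ interior O) (hJ : IsExhaustion O J) {k : ℕ}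
    (hk : 0 < k) : ∃ J', IsExhaustion O J' ∧ k * E.exhEnt f J ≤ E.exhEnt f^[k] J' := by
  obtain ⟨C, hC⟩ := hf.exists_dilation hd hO h0 k
  obtain ⟨c, hc1, hclim, hc⟩ := hC hJ
  have hJ' := hJ.smul hd hc1
  have hcpos : ∀ n, 0 < c n := fun n => one_pos.trans_le (hc1 n)
  have hlim : Tendsto (fun n => (k : ℝ)⁻¹ * c n ^ (d - 1)) atTop (𝓝 (k : ℝ)⁻¹) := by
    simpa using (hclim.pow (d - 1)).const_mul (k : ℝ)⁻¹
  refine ⟨_, hJ', ?_⟩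
  rw [← le_inv_mul_iff₀ (by positivity)]
  refine limsup_le_mul_limsup_comp tendsto_id hlim
    (.of_forall fun n => have := hcpos n; by positivity)
    (.of_forall (E.partEnt_div_per_nonneg hfm hJ))
    (.of_forall (E.partEnt_div_per_nonneg (hfm.iterate k) hJ'))
    (E.isBoundedUnder_partEnt_div_per (hf.iterate k) (hfm.iterate k) hd hO h0 hJ') ?_
  filter_upwards [hc] with n hn
  have hle : k * E.partEnt f (latOf (J n)) ≤ E.partEnt f^[k] (latOf (c n • J n)) :=
    E.mul_partEnt_le hfm hf.mapsTo (finite_latOf (hJ.1 n).1.isBounded)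
      (finite_latOf (hJ'.1 n).1.isBounded) hk fun l hl => hn.1 l hl.le
  have hcn : 0 < c n ^ (d - 1) := pow_pos (hcpos n) _
  calc E.partEnt f (latOf (J n)) / per (J n)
      ≤ (k : ℝ)⁻¹ * E.partEnt f^[k] (latOf (c n • J n)) / per (J n) :=
        div_le_div_of_nonneg_right ((le_inv_mul_iff₀ (by positivity)).2 hle) (per_nonneg _)
    _ = (k : ℝ)⁻¹ * c n ^ (d - 1) *
        (E.partEnt f^[k] (latOf (c n • J n)) / per (c n • J n)) := by
        rw [per_smul _ (by lia) (hcpos n), mul_assoc, mul_div_assoc' (c n ^ (d - 1)),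
          mul_div_mul_left _ _ hcn.ne', mul_div_assoc']

theorem rescEnt_iterate (hf : IsCellularAutomaton X f) (hfm : Measurable f) (hd : 2 ≤ d)
    (hO : IsCompact O) (h0 : 0 ∈ interior O) (k : ℕ) :
    E.rescEnt f^[k] O = k * E.rescEnt f O := by
  rcases k.eq_zero_or_pos with rfl | hk
  · simpa using E.rescEnt_id O
  refine le_antisymm (Real.sSup_le ?_ (by have := E.rescEnt_nonneg hf hfm hd hO h0; positivity)) ?_
  · rintro _ ⟨J, hJ, rfl⟩
    exact (E.exhEnt_iterate_le hf hfm hd hO h0 hJ hk).trans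
      (mul_le_mul_of_nonneg_left (E.exhEnt_le_rescEnt hf hfm hd hO h0 hJ) k.cast_nonneg)
  rw [← le_inv_mul_iff₀ (by positivity)]
  have hnonneg := E.rescEnt_nonneg (hf.iterate k) (hfm.iterate k) hd hO h0
  refine Real.sSup_le ?_ (by positivity)
  rintro _ ⟨J, hJ, rfl⟩
  obtain ⟨J', hJ', hle⟩ := E.exists_mul_exhEnt_le hf hfm hd hO h0 hJ hk
  rw [le_inv_mul_iff₀ (by positivity)]
  exact hle.trans (E.exhEnt_le_rescEnt (hf.iterate k) (hfm.iterate k) hd hO h0 hJ')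

end EntropyFunctional

section Functionals

universe u

lemma exists_eqOn_comp_of_factorsThrough {Ω F G : Type*} {X : Set Ω} (hX : X.Nonempty) {φ : Ω → F}
    {ψ : Ω → G} (h : (X.domRestrict ψ).FactorsThrough (X.domRestrict φ)) :
    ∃ e : F → G, EqOn ψ (e ∘ φ) X := by
  have : Nonempty G := ⟨ψ hX.some⟩
  obtain ⟨e, he⟩ := (Function.factorsThrough_iff _).1 h
  exact ⟨e, fun x hx => congrFun he ⟨x, hx⟩⟩

/-- Topological entropy of an observable: the logarithm of the number of values it takes on `X`. -/
noncomputable def topEntropyFunctional {Ω : Type u} [MeasurableSpace Ω] {X : Set Ω}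
    (hX : X.Nonempty) : EntropyFunctional X where
  entropy φ := Real.log (Nat.card (φ '' X))
  nonneg := Real.log_natCast_nonneg _
  mono {F G} _ _ _ _ φ ψ _ h := by
    obtain ⟨e, he⟩ := exists_eqOn_comp_of_factorsThrough hX h
    have hpos : 0 < (ψ '' X).ncard := (ncard_pos (toFinite _)).2 (hX.image ψ)
    simp only [Nat.card_coe_set_eq]
    rw [he.image_eq, image_comp] at hpos ⊢
    exact Real.log_le_log (Nat.cast_pos.2 hpos)
      (Nat.cast_le.2 (ncard_image_le (toFinite _)))
  le_log_card {F} _ _ _ φ _ := by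
    have := (hX.image φ).to_subtype
    exact Real.log_le_log (Nat.cast_pos.2 Nat.card_pos) (Nat.cast_le.2 (Finite.card_subtype_le _))

lemma negMulLog_sum_le {ι : Type*} {s : Finset ι} {a : ι → ℝ} (ha : ∀ i ∈ s, 0 ≤ a i) :
    Real.negMulLog (∑ i ∈ s, a i) ≤ ∑ i ∈ s, Real.negMulLog (a i) := by
  rw [Real.negMulLog, neg_mul, Finset.sum_mul, ← Finset.sum_neg_distrib]
  refine Finset.sum_le_sum fun i hi => ?_
  rw [Real.negMulLog, neg_mul, neg_le_neg_iff]
  rcases (ha i hi).eq_or_lt with h | h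
  · simp [← h]
  · exact mul_le_mul_of_nonneg_left (Real.log_le_log h (Finset.single_le_sum ha hi)) h.le

lemma sum_negMulLog_le_log_card {ι : Type*} [Fintype ι] {p : ι → ℝ} (hp : ∀ i, 0 ≤ p i)
    (hsum : ∑ i, p i = 1) : ∑ i, Real.negMulLog (p i) ≤ Real.log (Fintype.card ι) := by
  have : Nonempty ι := by
    by_contra! h
    simp at hsum
  have hN : (0 : ℝ) < Fintype.card ι := Nat.cast_pos.2 Fintype.card_pos
  have hjensen := Real.concaveOn_negMulLog.le_map_sum (t := Finset.univ)
    (w := fun _ => (Fintype.card ι : ℝ)⁻¹) (p := p) (fun _ _ => by positivity)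
    (by simp [hN.ne']) (fun i _ => hp i)
  simp only [smul_eq_mul, ← Finset.mul_sum, hsum, mul_one, Real.negMulLog, Real.log_inv,
    neg_mul_neg] at hjensen
  exact le_of_mul_le_mul_left hjensen (inv_pos.2 hN)

/-- Shannon entropy of the distribution of `φ` under `μ`. -/
noncomputable def shannonEntropy {Ω F : Type*} [MeasurableSpace Ω] (μ : Measure Ω) (φ : Ω → F) :
    ℝ :=
  ∑' q, Real.negMulLog (μ.real (φ ⁻¹' {q}))

section Shannon

variable {Ω F G : Type*} [MeasurableSpace Ω] {μ : Measure Ω} [Finite F] [MeasurableSpace F]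
  [MeasurableSingletonClass F] {φ : Ω → F}

lemma shannonEntropy_le_of_ae_eq_comp [Finite G] [IsFiniteMeasure μ] {ψ : Ω → G} {e : F → G}
    (hφ : Measurable φ) (h : ψ =ᵐ[μ] e ∘ φ) : shannonEntropy μ ψ ≤ shannonEntropy μ φ := by
  classical
  have := Fintype.ofFinite F
  have := Fintype.ofFinite G
  have hfib : ∀ q, μ.real (ψ ⁻¹' {q}) = ∑ p with e p = q, μ.real (φ ⁻¹' {p}) := fun q => by
    rw [sum_measureReal_preimage_singleton _ fun p _ => hφ (measurableSet_singleton p)]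
    refine measureReal_congr (h.mono fun x hx => propext ?_)
    change ψ x = q ↔ φ x ∈ _
    simp [hx]
  calc shannonEntropy μ ψ = ∑ q, Real.negMulLog (∑ p with e p = q, μ.real (φ ⁻¹' {p})) := by
        simp only [shannonEntropy, tsum_fintype, hfib]
    _ ≤ ∑ q, ∑ p with e p = q, Real.negMulLog (μ.real (φ ⁻¹' {p})) :=
        Finset.sum_le_sum fun _ _ => negMulLog_sum_le fun _ _ => measureReal_nonneg
    _ = shannonEntropy μ φ := by
        rw [shannonEntropy, tsum_fintype]
        exact Finset.sum_fiberwise _ e _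

lemma shannonEntropy_le_log_card [IsProbabilityMeasure μ] (hφ : Measurable φ) :
    shannonEntropy μ φ ≤ Real.log (Nat.card F) := by
  have := Fintype.ofFinite F
  rw [shannonEntropy, tsum_fintype, Nat.card_eq_fintype_card]
  refine sum_negMulLog_le_log_card (fun _ => measureReal_nonneg) ?_
  rw [sum_measureReal_preimage_singleton _ fun p _ => hφ (measurableSet_singleton p),
    Finset.coe_univ, preimage_univ, probReal_univ]

end Shannon

/-- Shannon entropy as an entropy functional on a set of full measure. -/
noncomputable def measEntropyFunctional {Ω : Type u} [MeasurableSpace Ω] (μ : Measure Ω)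
    [IsProbabilityMeasure μ] {X : Set Ω} (hX : ∀ᵐ x ∂μ, x ∈ X) : EntropyFunctional X where
  entropy φ := shannonEntropy μ φ
  nonneg := tsum_nonneg fun _ => Real.negMulLog_nonneg measureReal_nonneg measureReal_le_one
  mono hφ h :=
    have ⟨_, he⟩ := exists_eqOn_comp_of_factorsThrough hX.exists h
    shannonEntropy_le_of_ae_eq_comp hφ (hX.mono he)
  le_log_card hφ := shannonEntropy_le_log_card hφ

variable {A : Type u} {d : ℕ} [MeasurableSpace A] {X : Set (Config A d)}

lemma rescEnt_topEntropyFunctional (hX : X.Nonempty) (f : Config A d → Config A d)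
    (O : Set (EuclideanSpace ℝ (Fin d))) :
    (topEntropyFunctional hX).rescEnt f O = topRescEnt f X O := rfl

lemma rescEnt_measEntropyFunctional (μ : Measure (Config A d)) [IsProbabilityMeasure μ]
    (hX : ∀ᵐ x ∂μ, x ∈ X) (f : Config A d → Config A d) (O : Set (EuclideanSpace ℝ (Fin d))) :
    (measEntropyFunctional μ hX).rescEnt f O = measRescEnt μ f O := by
  simp only [EntropyFunctional.rescEnt, EntropyFunctional.exhEnt, EntropyFunctional.partEnt,
    measEntropyFunctional, shannonEntropy, pattern_preimage_singleton, measureReal_def,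
    measRescEnt, measPartEnt]

end Functionals

theorem stmt19_general {d : ℕ} {A : Type*} [Finite A] [TopologicalSpace A] [DiscreteTopology A]
    [MeasurableSpace A] [DiscreteMeasurableSpace A]
    {X : Set (Config A d)} (hXne : X.Nonempty) {f : Config A d → Config A d}
    (hf : IsCellularAutomaton X f) (hfm : Measurable f)
    {O : Set (EuclideanSpace ℝ (Fin d))} (hOc : IsCompact O) (hOconv : Convex ℝ O)
    (hO0 : 0 ∈ interior O) (hOper : per O = 1) (k : ℕ) :
    topRescEnt (f^[k]) X O = k * topRescEnt f X O ∧
      ∀ μ : Measure (Config A d), IsProbabilityMeasure μ → μ X = 1 →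
        measRescEnt μ (f^[k]) O = k * measRescEnt μ f O := by
  have hd : 2 ≤ d := two_le_of_per_eq_one hOc.isBounded hOconv hO0 hOper
  refine ⟨?_, fun μ _ hμX => ?_⟩
  · simp only [← rescEnt_topEntropyFunctional hXne]
    exact EntropyFunctional.rescEnt_iterate _ hf hfm hd hOc hO0 k
  · have hX : ∀ᵐ x ∂μ, x ∈ X := (mem_ae_iff_prob_eq_one hf.isClosed.measurableSet).2 hμX
    simp only [← rescEnt_measEntropyFunctional μ hX]
    exact EntropyFunctional.rescEnt_iterate _ hf hfm hd hOc hO0 k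

theorem stmt19 {d : ℕ} {A : Type*} [Fintype A] [TopologicalSpace A] [DiscreteTopology A]
    [MeasurableSpace A] [DiscreteMeasurableSpace A]
    (X : Set (Config A d)) (hXcl : IsClosed X) (hXne : X.Nonempty)
    (hXinv : ∀ l : Zd d, ∀ x ∈ X, shift l x ∈ X)
    (f : Config A d → Config A d) (hf : Set.MapsTo f X X) (hfm : Measurable f)
    (hfc : Continuous f)
    (hcomm : ∀ l : Zd d, ∀ x ∈ X, f (shift l x) = shift l (f x))
    (O : Set (EuclideanSpace ℝ (Fin d)))
    (hOc : IsCompact O) (hOconv : Convex ℝ O) (hO0 : 0 ∈ interior O)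
    (hOper : per O = 1) :
    ∀ k : ℕ,
      topRescEnt (f^[k]) X O = k * topRescEnt f X O ∧
      ∀ μ : Measure (Config A d), IsProbabilityMeasure μ → μ.map f = μ → μ X = 1 →
        measRescEnt μ (f^[k]) O = k * measRescEnt μ f O := by
  have hCA : IsCellularAutomaton X f := ⟨hXcl, hXinv, hf, hfc.continuousOn, hcomm⟩
  exact fun k => (stmt19_general hXne hCA hfm hOc hOconv hO0 hOper k).imp_right
    fun h μ hμ _ hμX => h μ hμ hμX
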